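/- For every n ≥ 0, the n-th Stirling coefficient γ_n satisfies γ_n = ((−1)^n (2n)!/(2^n n!)) · [x^{2n}] G^{−(n+1/2)} = Σ_{k=0}^{2n} ((−1)^n 2^{n+k+1} Γ(3n+3/2)/(√π (2n+2k+1)(2n−k)!)) Σ_{j=0}^k ((−1)^j S(2n+k+j, j)/((k−j)! (2n+k+j)!)), where [x^{2n}] denotes the coefficient of x^{2n}. -/

import Mathlib

open Finset

/-- The unsigned Stirling numbers of the first kind. -/
def stirling1 : ℕ → ℕ → ℕ
  | 0, 0 => 1
  | 0, _ + 1 => 0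
  | _ + 1, 0 => 0
  | n + 1, j + 1 => stirling1 n j + n * stirling1 n (j + 1)

/-- Generalized binomial coefficient `C(ρ, k) = ρ(ρ-1)⋯(ρ-k+1)/k!` for real `ρ`. -/
noncomputable def gbinomR (ρ : ℝ) (k : ℕ) : ℝ :=
  (∏ i ∈ Finset.range k, (ρ - i)) / (Nat.factorial k : ℝ)

/-- The formal power series `F(x) = 2(x - log(1+x))/x² = ∑_{m≥0} 2(-1)^m x^m/(m+2)`. -/
noncomputable def F : PowerSeries ℝ :=
  PowerSeries.mk fun m => 2 * (-1 : ℝ) ^ m / ((m : ℝ) + 2)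

/-- For real `ρ`, the formal power series `F^ρ := ∑_{k≥0} C(ρ,k) (F-1)^k`; since `F - 1`
has zero constant term, the coefficient of `x^n` only involves `k ≤ n`. -/
noncomputable def Fpow (ρ : ℝ) : PowerSeries ℝ :=
  PowerSeries.mk fun n =>
    ∑ k ∈ Finset.range (n + 1), gbinomR ρ k * PowerSeries.coeff n ((F - 1) ^ k)

/-- The `n`-th Stirling coefficient:
`γ_n = ((-1)^n (2n)!/(2^n n!)) · [x^{2n}] F^{-(n+1/2)}`. -/
noncomputable def stirlingCoeff (n : ℕ) : ℝ :=
  ((-1 : ℝ) ^ n * (Nat.factorial (2 * n) : ℝ) / (2 ^ n * (Nat.factorial n : ℝ))) *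
    PowerSeries.coeff (2 * n) (Fpow (-((n : ℝ) + 1 / 2)))

/-- The Stirling numbers of the second kind: `S(0,0) = 1`, `S(n,j) = 0` for `j > n` or
(`n ≥ 1` and `j = 0`), and `S(n+1,j) = S(n,j-1) + j·S(n,j)`. -/
def stirling2 : ℕ → ℕ → ℕ
  | 0, 0 => 1
  | 0, _ + 1 => 0
  | _ + 1, 0 => 0
  | n + 1, j + 1 => stirling2 n j + (j + 1) * stirling2 n (j + 1)

/-- The formal power series `G(x) = 2(eˣ - x - 1)/x² = ∑_{m≥0} 2 x^m/(m+2)!`. -/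
noncomputable def G : PowerSeries ℝ :=
  PowerSeries.mk fun m => 2 / (Nat.factorial (m + 2) : ℝ)

/-- For real `ρ`, the formal power series `G^ρ := ∑_{k≥0} C(ρ,k) (G-1)^k`. -/
noncomputable def Gpow (ρ : ℝ) : PowerSeries ℝ :=
  PowerSeries.mk fun n =>
    ∑ k ∈ Finset.range (n + 1), gbinomR ρ k * PowerSeries.coeff n ((G - 1) ^ k)

/-! The substitution `x ↦ eˣ - 1` turns `x - log (1 + x)` into `eˣ - 1 - x`, so that
`F(eˣ - 1) ((eˣ - 1) / x)² = G(x)`. Since the coefficient of `x ^ N` in `F ^ ρ` is the residue of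
`F ^ ρ / x ^ (N + 1)`, and residues are invariant under this substitution, for `2ρ = -(N + 1)` it
equals the coefficient of `x ^ N` in `G ^ ρ eˣ`. The difference with the coefficient in `G ^ ρ` is
the coefficient in `G ^ ρ (eˣ - 1)`. If `N ≠ 1`, so that `ρ + 1 ≠ 0`, this is the residue of a
constant multiple of the exact differential `d((x² G) ^ (ρ + 1))`, hence zero.

For the explicit formula, the coefficient of `x ^ N` in `G ^ ρ` is a combination of those in the
integer powers `G ^ k = 2 ^ k (eˣ - 1 - x) ^ k / x ^ (2k)`, and the binomial theorem reduces these
to the exponential generating functions `(eˣ - 1) ^ j / j!` of the Stirling numbers. -/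

section

open PowerSeries

section BinomialPow

variable {R : Type*} [CommRing R] {H K P : R⟦X⟧}

theorem hasSubst_sub_one (hH : constantCoeff H = 1) : HasSubst (H - 1) :=
  HasSubst.of_constantCoeff_zero' (by simp [hH])

variable [BinomialRing R]

/-- The power `H ^ r` of a power series with constant term `1`, for an exponent `r` in a binomial
ring, encoded as the binomial series `(1 + X) ^ r` evaluated at `H - 1`. If the constant term of
`H` is not `1`, the substitution may be undefined and the value is junk. -/
noncomputable def binomialPow (H : R⟦X⟧) (r : R) : R⟦X⟧ :=
  (binomialSeries R r).subst (H - 1)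

theorem coeff_binomialPow (hH : constantCoeff H = 1) (r : R) (n : ℕ) :
    coeff n (binomialPow H r) =
      ∑ k ∈ range (n + 1), Ring.choose r k * coeff n ((H - 1) ^ k) := by
  have hX : X ∣ H - 1 := X_dvd_iff.mpr (by simp [hH])
  rw [binomialPow, coeff_subst' (hasSubst_sub_one hH),
    finsum_eq_sum_of_support_subset (s := range (n + 1))]
  · simp
  · refine Function.support_subset_iff'.mpr fun k hk ↦ ?_
    have hnk : n < k := by simpa using hk
    rw [X_pow_dvd_iff.mp (pow_dvd_pow_of_dvd hX k) n hnk, smul_zero]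

theorem constantCoeff_binomialPow (hH : constantCoeff H = 1) (r : R) :
    constantCoeff (binomialPow H r) = 1 := by
  rw [← coeff_zero_eq_constantCoeff_apply, coeff_binomialPow hH]
  simp

theorem binomialPow_add (hH : constantCoeff H = 1) (r s : R) :
    binomialPow H (r + s) = binomialPow H r * binomialPow H s := by
  rw [binomialPow, binomialSeries_add, subst_mul (hasSubst_sub_one hH), binomialPow, binomialPow]

theorem binomialPow_natCast (hH : constantCoeff H = 1) (n : ℕ) :
    binomialPow H (n : R) = H ^ n := by
  have hs := hasSubst_sub_one hH
  rw [binomialPow, binomialSeries_nat, subst_pow hs, ← coe_substAlgHom hs, map_add, map_one,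
    substAlgHom_X, add_sub_cancel]

theorem binomialPow_zero (hH : constantCoeff H = 1) : binomialPow H (0 : R) = 1 := by
  simpa using binomialPow_natCast hH 0

theorem binomialPow_one (hH : constantCoeff H = 1) : binomialPow H (1 : R) = H := by
  simpa using binomialPow_natCast hH 1

theorem binomialPow_natCast_mul (hH : constantCoeff H = 1) (n : ℕ) (r : R) :
    binomialPow H (n * r) = binomialPow H r ^ n := by
  induction n with
  | zero => simp [binomialPow_zero hH]
  | succ n ih => rw [Nat.cast_succ, add_one_mul, binomialPow_add hH, ih, pow_succ]

theorem mul_binomialPow_neg_one (hH : constantCoeff H = 1) : H * binomialPow H (-1) = 1 := by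
  nth_rw 1 [← binomialPow_one hH]
  rw [← binomialPow_add hH, add_neg_cancel, binomialPow_zero hH]

theorem choose_succ_mul_add_one (r : R) (n : ℕ) :
    Ring.choose r (n + 1) * (n + 1 : R) = Ring.choose r n * (r - n) := by
  simpa [mul_comm, nsmul_eq_mul] using Ring.choose_smul_choose r (Nat.le_succ n)

theorem derivative_binomialSeries_mul (r : R) :
    d⁄dX R (binomialSeries R r) * (1 + X) = C r * binomialSeries R r := by
  ext n
  rw [mul_add, mul_one, map_add, coeff_C_mul]
  rcases n with _ | n
  · simp [coeff_derivative]
  · rw [coeff_succ_mul_X]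
    simp only [coeff_derivative, binomialSeries_coeff, smul_eq_mul, mul_one,
      choose_succ_mul_add_one]
    push_cast
    linear_combination -choose_succ_mul_add_one r n

theorem derivative_binomialPow_mul (hH : constantCoeff H = 1) (r : R) :
    d⁄dX R (binomialPow H r) * H = C r * binomialPow H r * d⁄dX R H := by
  have hs := hasSubst_sub_one hH
  have hC : (C r).subst (H - 1) = C r := subst_C _
  have h := congrArg (substAlgHom (R := R) hs) (derivative_binomialSeries_mul r)
  rw [map_mul, map_mul, map_add, map_one, substAlgHom_X, add_sub_cancel, coe_substAlgHom, hC] at h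
  rw [binomialPow, derivative_subst hs, map_sub, derivative_one, sub_zero]
  linear_combination d⁄dX R H * h

theorem eq_binomialPow_of_derivative_mul (hH : constantCoeff H = 1) {r : R}
    (hP : constantCoeff P = 1) (hd : d⁄dX R P * H = C r * P * d⁄dX R H) :
    P = binomialPow H r := by
  have := BinomialRing.toIsAddTorsionFree (R := R)
  have hQ : P * binomialPow H (-r) = 1 := by
    refine derivative.ext ?_ (by simp [hP, constantCoeff_binomialPow hH])
    have hHu : IsUnit H := .of_mul_eq_one _ (mul_binomialPow_neg_one hH)
    refine hHu.mul_left_injective ?_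
    have hneg := derivative_binomialPow_mul hH (-r)
    rw [map_neg] at hneg
    simp only [Derivation.leibniz, smul_eq_mul, derivative_one, zero_mul]
    linear_combination P * hneg + binomialPow H (-r) * hd
  have hr : binomialPow H (-r) * binomialPow H r = 1 := by
    rw [← binomialPow_add hH, neg_add_cancel, binomialPow_zero hH]
  calc P = P * (binomialPow H (-r) * binomialPow H r) := by rw [hr, mul_one]
    _ = binomialPow H r := by rw [← mul_assoc, hQ, one_mul]

theorem binomialPow_mul (hH : constantCoeff H = 1) (hK : constantCoeff K = 1) (r : R) :
    binomialPow (H * K) r = binomialPow H r * binomialPow K r := by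
  symm
  apply eq_binomialPow_of_derivative_mul
  · simp [hH, hK]
  · simp [constantCoeff_binomialPow, hH, hK]
  · simp only [Derivation.leibniz, smul_eq_mul]
    linear_combination binomialPow H r * H * derivative_binomialPow_mul hK r +
      binomialPow K r * K * derivative_binomialPow_mul hH r

theorem binomialPow_subst (hH : constantCoeff H = 1) (hK : HasSubst K) (r : R) :
    (binomialPow H r).subst K = binomialPow (H.subst K) r := by
  rw [binomialPow, subst_comp_subst_apply (hasSubst_sub_one hH) hK, binomialPow,
    ← coe_substAlgHom hK, map_sub, map_one]

theorem sum_neg_one_pow_mul_choose_add_one (r : R) (n : ℕ) :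
    ∑ i ∈ range (n + 1), (-1) ^ i * Ring.choose (r + 1) i = (-1) ^ n * Ring.choose r n := by
  induction n with
  | zero => simp
  | succ n ih => rw [sum_range_succ, ih, Ring.choose_succ_succ]; ring

theorem coeff_binomialPow_eq_sum_coeff_pow (hH : constantCoeff H = 1) (r : R) (n : ℕ) :
    coeff n (binomialPow H r) = ∑ k ∈ range (n + 1),
      (-1) ^ (n - k) * Ring.choose r k * Ring.choose (r - k - 1) (n - k) * coeff n (H ^ k) := by
  have expand_sub_one (m : ℕ) : coeff n ((H - 1) ^ m) =
      ∑ k ∈ range (m + 1), (-1) ^ (m - k) * (m.choose k : R) * coeff n (H ^ k) := by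
    rw [sub_eq_add_neg, add_pow, map_sum]
    refine sum_congr rfl fun k _ ↦ ?_
    rw [← coeff_C_mul]
    congr 1
    simp only [map_mul, map_pow, map_neg, map_one, map_natCast]
    ring
  calc coeff n (binomialPow H r)
      = ∑ m ∈ range (n + 1), ∑ k ∈ range (m + 1),
          Ring.choose r m * ((-1) ^ (m - k) * (m.choose k : R) * coeff n (H ^ k)) := by
        simp_rw [coeff_binomialPow hH, expand_sub_one, mul_sum]
    _ = ∑ k ∈ range (n + 1), ∑ m ∈ Ico k (n + 1),
          Ring.choose r m * ((-1) ^ (m - k) * (m.choose k : R) * coeff n (H ^ k)) :=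
        sum_comm' fun m k ↦ by simp only [mem_range, mem_Ico]; omega
    _ = _ := sum_congr rfl fun k hk ↦ ?_
  have hkn : k ≤ n := Nat.lt_succ_iff.mp (mem_range.mp hk)
  have hsum := sum_neg_one_pow_mul_choose_add_one (r - k - 1) (n - k)
  rw [sub_add_cancel] at hsum
  rw [sum_Ico_eq_sum_range, Nat.sub_add_comm hkn, mul_right_comm _ (Ring.choose r k), ← hsum,
    sum_mul, sum_mul]
  refine sum_congr rfl fun i _ ↦ ?_
  have hchoose := Ring.choose_smul_choose r (Nat.le_add_right k i)
  rw [nsmul_eq_mul, Nat.add_sub_cancel_left] at hchoose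
  rw [Nat.add_sub_cancel_left]
  linear_combination (-1) ^ i * coeff n (H ^ k) * hchoose

end BinomialPow

section Residue

variable {R : Type*} [CommRing R]

-- `P` plays the role of `H ^ r`: the left-hand side is then the residue of
-- `d ((X ^ k * H) ^ (r + 1)) / (r + 1)`, written without negative powers of `X`.
theorem coeff_mul_derivative_X_pow_mul_eq_zero [NoZeroDivisors R] {H P : R⟦X⟧} {r : R} {k N : ℕ}
    (hP : d⁄dX R P * H = C r * P * d⁄dX R H) (hr : r + 1 ≠ 0) (hN : k * r + N + 1 = 0) :
    coeff N (P * d⁄dX R (X ^ k * H)) = 0 := by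
  have coeff_X_mul_derivative (f : R⟦X⟧) (n : ℕ) : coeff n (X * d⁄dX R f) = n * coeff n f := by
    rcases n with _ | n
    · simp
    · rw [coeff_succ_X_mul, coeff_derivative, mul_comm, Nat.cast_succ]
  have hX : X * d⁄dX R (X ^ k) = (k : R⟦X⟧) * X ^ k := by
    rcases k with _ | k
    · simp
    · rw [derivative_pow, derivative_X, Nat.add_sub_cancel]; ring
  have key : C (r + 1) * (X * (P * d⁄dX R (X ^ k * H))) =
      X ^ k * (C ((r + 1) * k) * (P * H) + X * d⁄dX R (P * H)) := by
    simp only [Derivation.leibniz, smul_eq_mul, map_mul, map_add, map_one, map_natCast]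
    linear_combination (C r + 1) * P * H * hX - X * X ^ k * hP
  refine (mul_eq_zero.mp ?_).resolve_left hr
  rw [← coeff_succ_X_mul, ← coeff_C_mul, key, coeff_X_pow_mul', map_add, coeff_C_mul,
    coeff_X_mul_derivative]
  split_ifs with hkN
  · rw [Nat.cast_sub hkN, Nat.cast_succ]
    linear_combination coeff (N + 1 - k) (P * H) * hN
  · rfl

theorem coeff_pow_succ_mul_derivative_X_mul [NoZeroDivisors R] [CharZero R] {u v : R⟦X⟧}
    (huv : u * v = 1) (N : ℕ) :
    coeff N (v ^ (N + 1) * d⁄dX R (X * u)) = if N = 0 then 1 else 0 := by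
  rcases eq_or_ne N 0 with rfl | hN
  · have h := congrArg constantCoeff huv
    simpa [mul_comm] using h
  have hv : d⁄dX R v * u = -(v * d⁄dX R u) := by
    have h := congrArg (d⁄dX R) huv
    simp only [Derivation.leibniz, smul_eq_mul, derivative_one] at h
    linear_combination h
  have hpow : d⁄dX R (v ^ (N + 1)) * u = C (-(N + 1 : R)) * v ^ (N + 1) * d⁄dX R u := by
    rw [derivative_pow, Nat.add_sub_cancel]
    simp only [map_neg, map_add, map_natCast, map_one, Nat.cast_succ]
    linear_combination ((N : R⟦X⟧) + 1) * v ^ N * hv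
  rw [if_neg hN]
  simpa using coeff_mul_derivative_X_pow_mul_eq_zero (k := 1) (N := N) hpow (by simpa) (by simp)

theorem coeff_subst_mul_pow_succ_mul_derivative [NoZeroDivisors R] [CharZero R] {u v : R⟦X⟧}
    (huv : u * v = 1) (H : R⟦X⟧) (N : ℕ) :
    coeff N (H.subst (X * u) * v ^ (N + 1) * d⁄dX R (X * u)) = coeff N H := by
  have hs : HasSubst (X * u) := .of_constantCoeff_zero' (by simp)
  have subst_eq (H : R⟦X⟧) : H.subst (X * u) =
      C (constantCoeff H) + X * u * (mk fun p ↦ coeff (p + 1) H).subst (X * u) := by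
    conv_lhs => rw [H.eq_X_mul_shift_add_const]
    rw [subst_add hs, subst_mul hs, subst_X hs, add_comm]
    congr 1
    exact subst_C _
  induction N generalizing H with
  | zero =>
    have hv : constantCoeff (v ^ (0 + 1) * d⁄dX R (X * u)) = 1 := by
      rw [← coeff_zero_eq_constantCoeff_apply, coeff_pow_succ_mul_derivative_X_mul huv, if_pos rfl]
    have hH : constantCoeff (H.subst (X * u)) = constantCoeff H := by
      rw [subst_eq]
      simp
    rw [coeff_zero_eq_constantCoeff_apply, coeff_zero_eq_constantCoeff_apply, mul_assoc, map_mul,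
      hH, hv, mul_one]
  | succ N ih =>
    set T : R⟦X⟧ := mk fun p ↦ coeff (p + 1) H
    have split : H.subst (X * u) * v ^ (N + 1 + 1) * d⁄dX R (X * u) =
        C (constantCoeff H) * (v ^ (N + 1 + 1) * d⁄dX R (X * u)) +
          X * (T.subst (X * u) * v ^ (N + 1) * d⁄dX R (X * u)) := by
      rw [subst_eq]
      linear_combination X * T.subst (X * u) * v ^ (N + 1) * d⁄dX R (X * u) * huv
    rw [split, map_add, coeff_C_mul, coeff_pow_succ_mul_derivative_X_mul huv, coeff_succ_X_mul, ih]
    simp [T]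

end Residue

section ExpLog

theorem logOf_exp (A : Type*) [CommRing A] [Algebra ℚ A] : logOf (exp A) = X := by
  have := IsAddTorsionFree.of_module_rat A
  have hs : HasSubst (exp A - 1) := .exp_sub_one
  have geom : d⁄dX A (log A) * (1 + X) = 1 := by
    ext n
    rw [deriv_log]
    rcases n with _ | n
    · simp [mul_add]
    · simp [mul_add, coeff_succ_mul_X, coeff_one, pow_succ]
  have h := congrArg (substAlgHom (R := A) hs) geom
  rw [map_mul, map_add, map_one, substAlgHom_X, add_sub_cancel, coe_substAlgHom] at h
  apply derivative.ext
  · rw [logOf_eq, derivative_subst hs, map_sub, derivative_exp, derivative_one, sub_zero, h,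
      derivative_X]
  · rw [constantCoeff_X, constantCoeff_logOf constantCoeff_exp]

theorem coeff_exp_sub_one_pow (K : Type*) [Field K] [CharZero K] (m j : ℕ) :
    coeff m ((exp K - 1) ^ j) = (j.factorial * m.stirlingSecond j / m.factorial : K) := by
  induction m generalizing j with
  | zero => cases j <;> simp
  | succ m ih =>
    rcases j with _ | j
    · simp [coeff_one]
    have hd : d⁄dX K ((exp K - 1) ^ (j + 1)) =
        C (j + 1 : K) * ((exp K - 1) ^ (j + 1) + (exp K - 1) ^ j) := by
      rw [derivative_pow, map_sub, derivative_exp, derivative_one, Nat.add_sub_cancel]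
      simp only [map_add, map_natCast, map_one, Nat.cast_succ]
      ring
    have h := congrArg (coeff m) hd
    rw [coeff_derivative, coeff_C_mul, map_add, ih, ih] at h
    have hm : (m + 1 : K) ≠ 0 := Nat.cast_add_one_ne_zero m
    have hmf : (m.factorial : K) ≠ 0 := Nat.cast_ne_zero.mpr m.factorial_ne_zero
    apply mul_right_cancel₀ hm
    rw [h, Nat.stirlingSecond_succ_succ, Nat.factorial_succ, Nat.factorial_succ]
    push_cast
    field_simp

end ExpLog

theorem stirling2_eq_stirlingSecond (n k : ℕ) : stirling2 n k = n.stirlingSecond k := by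
  induction n generalizing k with
  | zero => cases k <;> rfl
  | succ n ih =>
    rcases k with _ | k
    · rfl
    · rw [stirling2, ih, ih, Nat.stirlingSecond_succ_succ, add_comm]

theorem gbinomR_eq_choose (ρ : ℝ) (k : ℕ) : gbinomR ρ k = Ring.choose ρ k := by
  rw [Ring.choose_eq_smul, gbinomR, smul_eq_mul, div_eq_inv_mul,
    ← descPochhammer_eval_eq_prod_range, ← Polynomial.aeval_eq_smeval,
    ← Polynomial.eval_map_algebraMap, descPochhammer_map]

theorem constantCoeff_F : constantCoeff F = 1 := by
  simp [← coeff_zero_eq_constantCoeff_apply, F]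

theorem constantCoeff_G : constantCoeff G = 1 := by
  simp [← coeff_zero_eq_constantCoeff_apply, G]

theorem Fpow_eq_binomialPow (ρ : ℝ) : Fpow ρ = binomialPow F ρ := by
  ext n
  simp_rw [coeff_binomialPow constantCoeff_F, Fpow, coeff_mk, gbinomR_eq_choose]

theorem Gpow_eq_binomialPow (ρ : ℝ) : Gpow ρ = binomialPow G ρ := by
  ext n
  simp_rw [coeff_binomialPow constantCoeff_G, Gpow, coeff_mk, gbinomR_eq_choose]

theorem X_sq_mul_F : X ^ 2 * F = C 2 * (X - log ℝ) := by
  ext n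
  rw [coeff_C_mul]
  rcases n with _ | _ | n
  · simp [coeff_X_pow_mul']
  · simp [coeff_X_pow_mul']
  · have : (n : ℝ) + 2 ≠ 0 := by positivity
    have : (n : ℝ) + 1 + 1 ≠ 0 := by positivity
    rw [show n + 1 + 1 = n + 2 from rfl, coeff_X_pow_mul, F, coeff_mk, map_sub, coeff_X,
      if_neg (by omega), coeff_log, if_neg (by omega), map_div₀, map_pow, map_neg, map_one,
      map_natCast]
    push_cast
    field_simp
    ring

theorem X_sq_mul_G : X ^ 2 * G = C 2 * (exp ℝ - 1 - X) := by
  ext n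
  rw [coeff_C_mul]
  rcases n with _ | _ | n
  · simp [coeff_X_pow_mul']
  · simp [coeff_X_pow_mul', coeff_one, coeff_exp]
  · rw [show n + 1 + 1 = n + 2 from rfl, coeff_X_pow_mul]
    simp [G, coeff_X, coeff_exp, coeff_one, div_eq_mul_inv]

/-- The power series `(eˣ - 1) / x`, the ratio of the substitution `x ↦ eˣ - 1` to `x`. -/
noncomputable def expSubOneDivX : ℝ⟦X⟧ :=
  mk fun p ↦ coeff (p + 1) (exp ℝ)

theorem X_mul_expSubOneDivX : X * expSubOneDivX = exp ℝ - 1 := by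
  have h := (exp ℝ).eq_X_mul_shift_add_const
  rw [constantCoeff_exp, map_one] at h
  exact (sub_eq_of_eq_add h).symm

theorem constantCoeff_expSubOneDivX : constantCoeff expSubOneDivX = 1 := by
  simp [← coeff_zero_eq_constantCoeff_apply, expSubOneDivX, coeff_exp]

theorem F_subst_exp_sub_one_mul : F.subst (exp ℝ - 1) * expSubOneDivX ^ 2 = G := by
  have hs : HasSubst (exp ℝ - 1) := .exp_sub_one
  have h := congrArg (substAlgHom (R := ℝ) hs) X_sq_mul_F
  rw [map_mul, map_mul, map_pow, map_sub, substAlgHom_X, coe_substAlgHom, ← logOf_eq, logOf_exp,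
    subst_C] at h
  apply mul_left_cancel₀ (pow_ne_zero 2 X_ne_zero)
  calc X ^ 2 * (F.subst (exp ℝ - 1) * expSubOneDivX ^ 2)
      = (X * expSubOneDivX) ^ 2 * F.subst (exp ℝ - 1) := by ring
    _ = C 2 * (exp ℝ - 1 - X) := by rw [X_mul_expSubOneDivX]; exact h
    _ = X ^ 2 * G := X_sq_mul_G.symm

theorem binomialPow_F_subst_exp_sub_one_mul (ρ : ℝ) :
    (binomialPow F ρ).subst (exp ℝ - 1) * binomialPow expSubOneDivX (2 * ρ) = binomialPow G ρ := by
  have hu := constantCoeff_expSubOneDivX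
  have hF : constantCoeff (F.subst (exp ℝ - 1)) = 1 := by
    simpa [hu, constantCoeff_G] using congrArg constantCoeff F_subst_exp_sub_one_mul
  rw [binomialPow_subst constantCoeff_F .exp_sub_one, ← F_subst_exp_sub_one_mul,
    binomialPow_mul hF (by simp [hu]), pow_two, binomialPow_mul hu hu, two_mul,
    binomialPow_add hu]

theorem coeff_binomialPow_F_eq_coeff_mul_exp {ρ : ℝ} {N : ℕ} (hρ : 2 * ρ + N + 1 = 0) :
    coeff N (binomialPow F ρ) = coeff N (binomialPow G ρ * exp ℝ) := by
  have hu := constantCoeff_expSubOneDivX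
  have hpow : binomialPow expSubOneDivX (-1) ^ (N + 1) = binomialPow expSubOneDivX (2 * ρ) := by
    rw [← binomialPow_natCast_mul hu]
    congr 1
    push_cast
    linear_combination -hρ
  rw [← coeff_subst_mul_pow_succ_mul_derivative (mul_binomialPow_neg_one hu), hpow,
    X_mul_expSubOneDivX, binomialPow_F_subst_exp_sub_one_mul, map_sub, derivative_exp,
    derivative_one, sub_zero]

theorem coeff_binomialPow_G_mul_exp_sub_one {ρ : ℝ} {N : ℕ} (hρ : 2 * ρ + N + 1 = 0)
    (hN : N ≠ 1) : coeff N (binomialPow G ρ * (exp ℝ - 1)) = 0 := by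
  have hρ_ne : ρ + 1 ≠ 0 := fun h ↦ hN (by exact_mod_cast (by linarith : (N : ℝ) = 1))
  have h := coeff_mul_derivative_X_pow_mul_eq_zero (k := 2)
    (derivative_binomialPow_mul constantCoeff_G ρ) hρ_ne (mod_cast hρ)
  have hd : d⁄dX ℝ (X ^ 2 * G) = C 2 * (exp ℝ - 1) := by
    rw [X_sq_mul_G, ← smul_eq_C_mul, Derivation.map_smul, map_sub, map_sub, derivative_exp,
      derivative_one, derivative_X, sub_zero, smul_eq_C_mul]
  rw [hd, mul_left_comm, coeff_C_mul] at h
  exact (mul_eq_zero.mp h).resolve_left two_ne_zero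

theorem coeff_binomialPow_F_eq_coeff_binomialPow_G {ρ : ℝ} {N : ℕ} (hρ : 2 * ρ + N + 1 = 0)
    (hN : N ≠ 1) : coeff N (binomialPow F ρ) = coeff N (binomialPow G ρ) := by
  have h := coeff_binomialPow_G_mul_exp_sub_one hρ hN
  rw [mul_sub, mul_one, map_sub, sub_eq_zero] at h
  rw [coeff_binomialPow_F_eq_coeff_mul_exp hρ, h]

theorem coeff_G_pow (N k : ℕ) : coeff N (G ^ k) = (-2) ^ k * k.factorial *
    ∑ j ∈ range (k + 1), (-1) ^ j * (stirling2 (N + k + j) j : ℝ) /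
      ((k - j).factorial * (N + k + j).factorial) := by
  have hG : X ^ (2 * k) * G ^ k = C (2 ^ k) * ((exp ℝ - 1) + -X) ^ k := by
    rw [pow_mul, ← mul_pow, X_sq_mul_G, mul_pow, map_pow, sub_eq_add_neg _ X]
  rw [← coeff_X_pow_mul (G ^ k) (2 * k) N, hG, coeff_C_mul, add_pow, map_sum, Finset.mul_sum,
    Finset.mul_sum]
  refine sum_congr rfl fun j hj ↦ ?_
  obtain ⟨d, rfl⟩ := Nat.exists_eq_add_of_le (Nat.lt_succ_iff.mp (mem_range.mp hj))
  have hterm : (exp ℝ - 1) ^ j * (-X) ^ d * ((j + d).choose j : ℝ⟦X⟧) =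
      C ((-1) ^ d * ((j + d).choose j : ℝ)) * (X ^ d * (exp ℝ - 1) ^ j) := by
    rw [map_mul, map_pow, map_neg, map_one, map_natCast, neg_pow]
    ring
  have hsign : (-1 : ℝ) ^ (j + d) * (-1) ^ j = (-1) ^ d := by
    rw [pow_add, mul_right_comm, ← mul_pow, neg_one_mul, neg_neg, one_pow, one_mul]
  have hchoose : ((j + d).factorial : ℝ) = (j + d).choose j * j.factorial * d.factorial := by
    have h := Nat.choose_mul_factorial_mul_factorial (Nat.le_add_right j d)
    rw [Nat.add_sub_cancel_left] at h
    exact_mod_cast h.symm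
  rw [Nat.add_sub_cancel_left, hterm, coeff_C_mul,
    show N + 2 * (j + d) = N + (j + d) + j + d by ring, coeff_X_pow_mul, coeff_exp_sub_one_pow,
    stirling2_eq_stirlingSecond, neg_pow 2, ← hsign, hchoose]
  field_simp

theorem choose_neg_eq_Gamma {a : ℝ} (ha : 0 < a) (k : ℕ) :
    Ring.choose (-a) k = (-1) ^ k * Real.Gamma (a + k) / (Real.Gamma a * k.factorial) := by
  have hΓ : Real.Gamma a ≠ 0 := (Real.Gamma_pos_of_pos ha).ne'
  induction k with
  | zero => simp [hΓ]
  | succ k ih =>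
    have hk : (k + 1 : ℝ) ≠ 0 := by positivity
    apply mul_right_cancel₀ hk
    rw [choose_succ_mul_add_one, ih, Nat.cast_succ, ← add_assoc, Real.Gamma_add_one (by positivity),
      Nat.factorial_succ]
    push_cast
    field_simp
    ring

theorem coeff_binomialPow_G_neg {a : ℝ} (ha : 0 < a) (N : ℕ) :
    coeff N (binomialPow G (-a)) = ∑ k ∈ range (N + 1),
      2 ^ k * Real.Gamma (a + N + 1) / (Real.Gamma a * (a + k) * (N - k).factorial) *
        ∑ j ∈ range (k + 1), (-1) ^ j * (stirling2 (N + k + j) j : ℝ) /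
          ((k - j).factorial * (N + k + j).factorial) := by
  rw [coeff_binomialPow_eq_sum_coeff_pow constantCoeff_G]
  refine sum_congr rfl fun k hk ↦ ?_
  rw [coeff_G_pow, ← mul_assoc]
  congr 1
  obtain ⟨d, rfl⟩ := Nat.exists_eq_add_of_le (Nat.lt_succ_iff.mp (mem_range.mp hk))
  have hak : 0 < a + k := by positivity
  have hΓ : Real.Gamma a ≠ 0 := (Real.Gamma_pos_of_pos ha).ne'
  have hΓk : Real.Gamma (a + k) ≠ 0 := (Real.Gamma_pos_of_pos hak).ne'
  have hsign (m : ℕ) : (-1 : ℝ) ^ m * (-1) ^ m = 1 := by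
    rw [← mul_pow, neg_one_mul, neg_neg, one_pow]
  rw [Nat.add_sub_cancel_left, show -a - k - 1 = -(a + k + 1) by ring,
    choose_neg_eq_Gamma ha, choose_neg_eq_Gamma (by positivity), Real.Gamma_add_one hak.ne',
    show a + k + 1 + d = a + (k + d : ℕ) + 1 by push_cast; ring, neg_pow 2 k]
  field_simp
  linear_combination (-1) ^ k * (-1) ^ k * hsign d + hsign k

theorem factorial_two_mul_div_eq_Gamma (n : ℕ) :
    ((2 * n).factorial : ℝ) / (2 ^ n * n.factorial) =
      2 ^ n * Real.Gamma (n + 1 / 2) / √Real.pi := by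
  induction n with
  | zero =>
    have hπ : √Real.pi ≠ 0 := by positivity
    simp [-one_div, Real.Gamma_one_half_eq, hπ]
  | succ n ih =>
    rw [div_eq_iff (by positivity)] at ih
    rw [show ((n + 1 : ℕ) : ℝ) + 1 / 2 = n + 1 / 2 + 1 by push_cast; ring,
      Real.Gamma_add_one (by positivity), show 2 * (n + 1) = 2 * n + 1 + 1 by ring,
      Nat.factorial_succ, Nat.factorial_succ, Nat.factorial_succ]
    push_cast
    rw [ih]
    field_simp
    ring

end

/-- The Stirling coefficients equal `((-1)^n (2n)!/(2^n n!)) [x^{2n}] G^{-(n+1/2)}` and are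
given explicitly in terms of the Stirling numbers of the second kind (formula (24)). -/
theorem stirlingCoeff_eq_via_G (n : ℕ) :
    stirlingCoeff n =
      ((-1 : ℝ) ^ n * (Nat.factorial (2 * n) : ℝ) / (2 ^ n * (Nat.factorial n : ℝ))) *
        PowerSeries.coeff (2 * n) (Gpow (-((n : ℝ) + 1 / 2))) ∧
    stirlingCoeff n =
      ∑ k ∈ Finset.range (2 * n + 1),
        ((-1 : ℝ) ^ n * 2 ^ (n + k + 1) * Real.Gamma (3 * n + 3 / 2) /
            (Real.sqrt Real.pi * (2 * (n : ℝ) + 2 * k + 1) * (Nat.factorial (2 * n - k) : ℝ))) *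
          ∑ j ∈ Finset.range (k + 1),
            (-1 : ℝ) ^ j * (stirling2 (2 * n + k + j) j : ℝ) /
              ((Nat.factorial (k - j) : ℝ) * (Nat.factorial (2 * n + k + j) : ℝ)) := by
  have hF : stirlingCoeff n =
      ((-1 : ℝ) ^ n * (Nat.factorial (2 * n) : ℝ) / (2 ^ n * (Nat.factorial n : ℝ))) *
        PowerSeries.coeff (2 * n) (Gpow (-((n : ℝ) + 1 / 2))) := by
    rw [stirlingCoeff, Fpow_eq_binomialPow, Gpow_eq_binomialPow,
      coeff_binomialPow_F_eq_coeff_binomialPow_G (by push_cast; ring) (by omega)]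
  refine ⟨hF, ?_⟩
  rw [hF, Gpow_eq_binomialPow, coeff_binomialPow_G_neg (by positivity), mul_sum, mul_div_assoc,
    factorial_two_mul_div_eq_Gamma,
    show (n + 1 / 2 + (2 * n : ℕ) + 1 : ℝ) = 3 * n + 3 / 2 by push_cast; ring]
  refine sum_congr rfl fun k _ ↦ ?_
  have hΓ : Real.Gamma (n + 1 / 2) ≠ 0 := (Real.Gamma_pos_of_pos (by positivity)).ne'
  rw [← mul_assoc]
  congr 1
  rw [show (n + 1 / 2 + k : ℝ) = (2 * n + 2 * k + 1) / 2 by ring]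
  field_simp [hΓ]
  ring
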